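/- Let Ω be an open subset of ℝⁿ and let f = (u₁, v₁) and g = (u₂, v₂) be H-continuous pairs on Ω. Let s = u₁ + u₂ and t = v₁ + v₂. Then both pairs F(I(S(t))) = (I(I(S(t))), S(I(S(t)))) and F(S(I(s))) = (I(S(I(s))), S(S(I(s)))) are H-continuous, both satisfy the inclusion s(x) ≤ (lower component)(x) ≤ (upper component)(x) ≤ t(x) for all x ∈ Ω, and consequently both are equal to f ⊕ g, the unique H-continuous pair contained in the pointwise interval sum f + g. -/

import Mathlib

open Set

/-- Points of `ℝⁿ`. -/
abbrev Pt (n : ℕ) := EuclideanSpace ℝ (Fin n)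

/-- Lower Baire operator `I(D,Ω,f)(x) = sup_{δ>0} inf { f y : y ∈ B_δ(x) ∩ D }`,
where `B_δ(x) = { y ∈ Ω : ‖y - x‖ < δ }`. -/
noncomputable def Ilow {n : ℕ} (D Om : Set (Pt n)) (f : Pt n → ℝ) (x : Pt n) : ℝ :=
  sSup {a : ℝ | ∃ δ : ℝ, 0 < δ ∧
    a = sInf (f '' {y | y ∈ Om ∧ ‖y - x‖ < δ ∧ y ∈ D})}

/-- Upper Baire operator `S(D,Ω,f)(x) = inf_{δ>0} sup { f y : y ∈ B_δ(x) ∩ D }`. -/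
noncomputable def Shigh {n : ℕ} (D Om : Set (Pt n)) (f : Pt n → ℝ) (x : Pt n) : ℝ :=
  sInf {a : ℝ | ∃ δ : ℝ, 0 < δ ∧
    a = sSup (f '' {y | y ∈ Om ∧ ‖y - x‖ < δ ∧ y ∈ D})}

/-- `f`, defined on `D ⊆ Ω`, is locally bounded relative to `Ω`. -/
def LocBddOn {n : ℕ} (Om D : Set (Pt n)) (f : Pt n → ℝ) : Prop :=
  ∀ x ∈ Om, ∃ δ : ℝ, 0 < δ ∧ ∃ M : ℝ,
    ∀ y, y ∈ Om → ‖y - x‖ < δ → y ∈ D → |f y| < M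

/-- `(u, v)` encodes an interval-valued function `x ↦ [u x, v x]` on `Om`. -/
def IntervalPair {n : ℕ} (Om : Set (Pt n)) (u v : Pt n → ℝ) : Prop :=
  LocBddOn Om Om u ∧ LocBddOn Om Om v ∧ ∀ x ∈ Om, u x ≤ v x

/-- The pair `(u, v)` is S-continuous on `Om`: `I(u) = u` and `S(v) = v`. -/
def SCont {n : ℕ} (Om : Set (Pt n)) (u v : Pt n → ℝ) : Prop :=
  ∀ x ∈ Om, Ilow Om Om u x = u x ∧ Shigh Om Om v x = v x

/-- The pair `(u, v)` is Hausdorff continuous on `Om`. -/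
def HCont {n : ℕ} (Om : Set (Pt n)) (u v : Pt n → ℝ) : Prop :=
  ∀ p q : Pt n → ℝ, LocBddOn Om Om p → LocBddOn Om Om q →
    (∀ x ∈ Om, u x ≤ p x ∧ p x ≤ q x ∧ q x ≤ v x) →
    ∀ x ∈ Om, Ilow Om Om p x = u x ∧ Shigh Om Om q x = v x

/-- `(u, v)` is an H-continuous interval pair on `Om`. -/
def HContPair {n : ℕ} (Om : Set (Pt n)) (u v : Pt n → ℝ) : Prop :=
  IntervalPair Om u v ∧ HCont Om u v

/-- Lower endpoint of the pointwise interval product. -/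
noncomputable def imin {n : ℕ} (u₁ v₁ u₂ v₂ : Pt n → ℝ) (x : Pt n) : ℝ :=
  min (min (u₁ x * u₂ x) (u₁ x * v₂ x)) (min (v₁ x * u₂ x) (v₁ x * v₂ x))

/-- Upper endpoint of the pointwise interval product. -/
noncomputable def imax {n : ℕ} (u₁ v₁ u₂ v₂ : Pt n → ℝ) (x : Pt n) : ℝ :=
  max (max (u₁ x * u₂ x) (u₁ x * v₂ x)) (max (v₁ x * u₂ x) (v₁ x * v₂ x))

/-- `(pl, pu)` is the H-continuous pair contained pointwise in the interval sum of
`(u₁, v₁)` and `(u₂, v₂)`, i.e. `(pl, pu) = (u₁,v₁) ⊕ (u₂,v₂)`. -/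
def IsOplus {n : ℕ} (Om : Set (Pt n)) (u₁ v₁ u₂ v₂ pl pu : Pt n → ℝ) : Prop :=
  HContPair Om pl pu ∧
    ∀ x ∈ Om, u₁ x + u₂ x ≤ pl x ∧ pl x ≤ pu x ∧ pu x ≤ v₁ x + v₂ x

/-- `(ql, qu)` is the H-continuous pair contained pointwise in the interval product of
`(u₁, v₁)` and `(u₂, v₂)`, i.e. `(ql, qu) = (u₁,v₁) ⊗ (u₂,v₂)`. -/
def IsOtimes {n : ℕ} (Om : Set (Pt n)) (u₁ v₁ u₂ v₂ ql qu : Pt n → ℝ) : Prop :=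
  HContPair Om ql qu ∧
    ∀ x ∈ Om, imin u₁ v₁ u₂ v₂ x ≤ ql x ∧ ql x ≤ qu x ∧ qu x ≤ imax u₁ v₁ u₂ v₂ x

/-!
`I f` is the greatest lower semicontinuous minorant of `f` and `S f` its least upper semicontinuous
majorant, so the Hausdorff continuous pairs are exactly the pairs `(u, v)` with `u = I v` and
`v = S u`. Such pairs compare as soon as `u ≤ v'`: apply `I`, then `S`.

Existence of the sum: `I (S t)` generates a Hausdorff continuous pair, and it stays between
`s = u₁ + u₂` and `t = v₁ + v₂` because `s` is lower and `t` upper semicontinuous.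

Uniqueness: `I (f + g) - S g` is lower semicontinuous and at most `f`, so `I (f + g) ≤ I f + S g`;
with the dual inequality this gives `I (v₁ + v₂) ≤ u₁ + v₂ ≤ S (u₁ + u₂)`, hence any two pairs
contained in `[s, t]` are comparable in both directions.

The claims about `S (I s)` follow from those about `I (S t)` under `f ↦ -f`.
-/

open Bornology Metric Topology

/-- Boundedness of `f` on every bounded subset of `A`. The balls in `Ilow` and `Shigh` have
arbitrarily large radii, and on an unbounded image the real `sInf` and `sSup` take the junk value
`0`, so local boundedness does not give the expected laws of these operators. -/
def BoundedOnBounded {X : Type*} [Bornology X] (A : Set X) (f : X → ℝ) : Prop :=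
  ∀ B ⊆ A, IsBounded B → IsBounded (f '' B)

namespace BoundedOnBounded

section Bornology

variable {X : Type*} [Bornology X] {A : Set X} {f g p : X → ℝ}

lemma neg (hf : BoundedOnBounded A f) : BoundedOnBounded A (-f) := by
  intro B hBA hB
  have himage : (-f) '' B = -(f '' B) := by
    rw [← image_neg_eq_neg, image_image]
    rfl
  exact himage ▸ (hf B hBA hB).neg

lemma add (hf : BoundedOnBounded A f) (hg : BoundedOnBounded A g) :
    BoundedOnBounded A (f + g) := by
  intro B hBA hB
  refine ((hf B hBA hB).add (hg B hBA hB)).subset ?_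
  rintro _ ⟨y, hy, rfl⟩
  exact add_mem_add (mem_image_of_mem f hy) (mem_image_of_mem g hy)

lemma of_bddBelow_of_bddAbove (hf : ∀ B ⊆ A, IsBounded B → BddBelow (f '' B))
    (hg : ∀ B ⊆ A, IsBounded B → BddAbove (g '' B))
    (hfp : ∀ x ∈ A, f x ≤ p x) (hpg : ∀ x ∈ A, p x ≤ g x) : BoundedOnBounded A p := by
  intro B hBA hB
  obtain ⟨m, hm⟩ := hf B hBA hB
  obtain ⟨M, hM⟩ := hg B hBA hB
  refine isBounded_iff_bddBelow_bddAbove.2 ⟨⟨m, ?_⟩, ⟨M, ?_⟩⟩ <;> rintro _ ⟨y, hy, rfl⟩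
  · exact (hm (mem_image_of_mem f hy)).trans (hfp y (hBA hy))
  · exact (hpg y (hBA hy)).trans (hM (mem_image_of_mem g hy))

lemma of_le_of_le (hf : BoundedOnBounded A f) (hg : BoundedOnBounded A g)
    (hfp : ∀ x ∈ A, f x ≤ p x) (hpg : ∀ x ∈ A, p x ≤ g x) : BoundedOnBounded A p :=
  of_bddBelow_of_bddAbove (fun B hBA hB => (hf B hBA hB).bddBelow)
    (fun B hBA hB => (hg B hBA hB).bddAbove) hfp hpg

end Bornology

lemma bddBelow_image_ball {X : Type*} [PseudoMetricSpace X] {A : Set X} {f : X → ℝ}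
    (hf : BoundedOnBounded A f) (x : X) (δ : ℝ) : BddBelow (f '' (ball x δ ∩ A)) :=
  (hf _ inter_subset_right (isBounded_ball.subset inter_subset_left)).bddBelow

end BoundedOnBounded

section Baire

variable {n : ℕ} {Om : Set (Pt n)} {f g : Pt n → ℝ} {x : Pt n}

lemma BoundedOnBounded.locBddOn (hf : BoundedOnBounded Om f) : LocBddOn Om Om f := by
  intro x _
  obtain ⟨M, hM⟩ := isBounded_iff_forall_norm_le.1
    (hf (ball x 1 ∩ Om) inter_subset_right (isBounded_ball.subset inter_subset_left))
  refine ⟨1, one_pos, M + 1, fun y hy hyx _ => ?_⟩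
  have hyM : |f y| ≤ M := hM _ ⟨y, ⟨mem_ball_iff_norm.2 hyx, hy⟩, rfl⟩
  linarith

lemma Shigh_eq_neg_Ilow_neg (D Om : Set (Pt n)) (f : Pt n → ℝ) :
    Shigh D Om f = -Ilow D Om (-f) := by
  have sInf_image_neg (A : Set (Pt n)) : sInf ((-f) '' A) = -sSup (f '' A) := by
    rw [← Real.sInf_neg, ← image_neg_eq_neg, image_image]
    rfl
  ext x
  rw [Pi.neg_apply]
  simp only [Shigh, Ilow, sInf_image_neg]
  rw [← Real.sInf_neg]
  congr 1
  ext a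
  simp only [Set.mem_neg, mem_ofPred_eq, neg_inj]

lemma Ilow_neg (D Om : Set (Pt n)) (f : Pt n → ℝ) : Ilow D Om (-f) = -Shigh D Om f := by
  rw [Shigh_eq_neg_Ilow_neg, neg_neg]

lemma Shigh_neg (D Om : Set (Pt n)) (f : Pt n → ℝ) : Shigh D Om (-f) = -Ilow D Om f := by
  rw [Shigh_eq_neg_Ilow_neg, neg_neg]

lemma Ilow_eq_iSup_sInf_image_ball (Om : Set (Pt n)) (f : Pt n → ℝ) (x : Pt n) :
    Ilow Om Om f x = ⨆ δ : Ioi (0 : ℝ), sInf (f '' (ball x δ ∩ Om)) := by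
  have ball_inter (δ : ℝ) : {y | y ∈ Om ∧ ‖y - x‖ < δ ∧ y ∈ Om} = ball x δ ∩ Om := by
    ext y
    simp only [mem_ofPred_eq, mem_inter_iff, mem_ball_iff_norm]
    tauto
  simp only [Ilow, ball_inter, iSup]
  congr 1
  ext a
  simp [eq_comm]

lemma sInf_image_ball_le_Ilow (hx : x ∈ Om) {δ : ℝ} (hδ : 0 < δ) :
    sInf (f '' (ball x δ ∩ Om)) ≤ Ilow Om Om f x := by
  rw [Ilow_eq_iSup_sInf_image_ball]
  refine le_ciSup (f := fun δ : Ioi (0 : ℝ) => sInf (f '' (ball x δ ∩ Om)))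
    ⟨max (f x) 0, ?_⟩ ⟨δ, hδ⟩
  rintro _ ⟨⟨ε, hε⟩, rfl⟩
  by_cases hbdd : BddBelow (f '' (ball x ε ∩ Om))
  · exact (csInf_le hbdd (mem_image_of_mem f ⟨mem_ball_self hε, hx⟩)).trans (le_max_left _ _)
  · exact (Real.sInf_of_not_bddBelow hbdd).trans_le (le_max_right _ _)

lemma Ilow_le (hf : BoundedOnBounded Om f) (hx : x ∈ Om) : Ilow Om Om f x ≤ f x := by
  rw [Ilow_eq_iSup_sInf_image_ball]
  exact ciSup_le fun δ =>
    csInf_le (hf.bddBelow_image_ball x δ) (mem_image_of_mem f (mem_inter (mem_ball_self δ.2) hx))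

lemma le_Ilow_of_ball (hx : x ∈ Om) {c δ : ℝ} (hδ : 0 < δ) (h : ∀ y ∈ ball x δ ∩ Om, c ≤ f y) :
    c ≤ Ilow Om Om f x := by
  have hne : (f '' (ball x δ ∩ Om)).Nonempty := ⟨f x, mem_image_of_mem f ⟨mem_ball_self hδ, hx⟩⟩
  exact (le_csInf hne (forall_mem_image.2 h)).trans (sInf_image_ball_le_Ilow hx hδ)

lemma exists_ball_of_lt_Ilow (hf : BoundedOnBounded Om f) {c : ℝ} (hc : c < Ilow Om Om f x) :
    ∃ δ > 0, ∀ y ∈ ball x δ ∩ Om, c < f y := by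
  rw [Ilow_eq_iSup_sInf_image_ball] at hc
  obtain ⟨⟨δ, hδ⟩, hcδ⟩ := exists_lt_of_lt_ciSup hc
  exact ⟨δ, hδ, fun y hy => hcδ.trans_le
    (csInf_le (hf.bddBelow_image_ball x δ) (mem_image_of_mem f hy))⟩

lemma lowerSemicontinuousOn_Ilow (hf : BoundedOnBounded Om f) :
    LowerSemicontinuousOn (Ilow Om Om f) Om := by
  intro x _ c hc
  obtain ⟨c', hcc', hc'⟩ := exists_between hc
  obtain ⟨δ, hδ, hball⟩ := exists_ball_of_lt_Ilow hf hc'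
  filter_upwards [inter_mem_nhdsWithin Om (ball_mem_nhds x hδ)] with y hy
  obtain ⟨ε, hε, hsub⟩ := isOpen_iff.1 isOpen_ball y hy.2
  exact hcc'.trans_le
    (le_Ilow_of_ball hy.1 hε fun z hz => (hball z ⟨hsub hz.1, hz.2⟩).le)

lemma le_Ilow (hg : LowerSemicontinuousOn g Om)
    (hgf : ∀ x ∈ Om, g x ≤ f x) (hx : x ∈ Om) : g x ≤ Ilow Om Om f x := by
  refine le_of_forall_lt fun c hc => ?_
  obtain ⟨c', hcc', hc'⟩ := exists_between hc
  obtain ⟨δ, hδ, hball⟩ := mem_nhdsWithin_iff.1 (hg x hx c' hc')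
  exact hcc'.trans_le
    (le_Ilow_of_ball hx hδ fun y hy => (hball hy : c' < g y).le.trans (hgf y hy.2))

lemma Ilow_mono (hf : BoundedOnBounded Om f) (hfg : ∀ x ∈ Om, f x ≤ g x) (hx : x ∈ Om) :
    Ilow Om Om f x ≤ Ilow Om Om g x :=
  le_Ilow (lowerSemicontinuousOn_Ilow hf) (fun y hy => (Ilow_le hf hy).trans (hfg y hy)) hx

lemma le_Shigh (hf : BoundedOnBounded Om f) (hx : x ∈ Om) : f x ≤ Shigh Om Om f x := by
  rw [Shigh_eq_neg_Ilow_neg]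
  exact le_neg_of_le_neg (Ilow_le hf.neg hx)

lemma upperSemicontinuousOn_Shigh (hf : BoundedOnBounded Om f) :
    UpperSemicontinuousOn (Shigh Om Om f) Om := by
  rw [Shigh_eq_neg_Ilow_neg]
  exact continuous_neg.comp_lowerSemicontinuousOn_antitone
    (lowerSemicontinuousOn_Ilow hf.neg) fun _ _ => neg_le_neg

lemma Shigh_le (hg : UpperSemicontinuousOn g Om) (hfg : ∀ x ∈ Om, f x ≤ g x) (hx : x ∈ Om) :
    Shigh Om Om f x ≤ g x := by
  have hneg : LowerSemicontinuousOn (-g) Om :=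
    continuous_neg.comp_upperSemicontinuousOn_antitone hg fun _ _ => neg_le_neg
  rw [Shigh_eq_neg_Ilow_neg]
  exact neg_le_of_neg_le (le_Ilow hneg (fun y hy => neg_le_neg (hfg y hy)) hx)

lemma Shigh_mono (hg : BoundedOnBounded Om g) (hfg : ∀ x ∈ Om, f x ≤ g x) (hx : x ∈ Om) :
    Shigh Om Om f x ≤ Shigh Om Om g x :=
  Shigh_le (upperSemicontinuousOn_Shigh hg) (fun y hy => (hfg y hy).trans (le_Shigh hg hy)) hx

namespace BoundedOnBounded

lemma Ilow (hf : BoundedOnBounded Om f) : BoundedOnBounded Om (Ilow Om Om f) := by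
  refine of_bddBelow_of_bddAbove (fun B hBOm hB => ?_)
    (fun B hBOm hB => (hf B hBOm hB).bddAbove) (fun _ _ => le_rfl) (fun _ => Ilow_le hf)
  obtain ⟨m, hm⟩ := (hf (thickening 1 B ∩ Om) inter_subset_right
    (hB.thickening.subset inter_subset_left)).bddBelow
  refine ⟨m, forall_mem_image.2 fun x hx => ?_⟩
  exact le_Ilow_of_ball (hBOm hx) one_pos fun y hy =>
    hm (mem_image_of_mem f ⟨ball_subset_thickening hx 1 hy.1, hy.2⟩)

lemma Shigh (hf : BoundedOnBounded Om f) : BoundedOnBounded Om (Shigh Om Om f) := by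
  rw [Shigh_eq_neg_Ilow_neg]
  exact hf.neg.Ilow.neg

end BoundedOnBounded

-- If `f` were unbounded below on `B`, then `sInf` would take the junk value `0` on every ball
-- containing `B`, so `I f ≤ f` would force `f ≥ 0` on `B`.
lemma bddBelow_image_of_Ilow_le (hf : ∀ x ∈ Om, Ilow Om Om f x ≤ f x) :
    ∀ B ⊆ Om, IsBounded B → BddBelow (f '' B) := by
  intro B hBOm hB
  by_contra hunbdd
  refine hunbdd ⟨0, forall_mem_image.2 fun x hx => ?_⟩
  obtain ⟨δ, hδ, hBδ⟩ := hB.subset_ball_lt 0 x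
  have hsub : f '' B ⊆ f '' (ball x δ ∩ Om) := image_mono (subset_inter hBδ hBOm)
  calc (0 : ℝ) = sInf (f '' (ball x δ ∩ Om)) :=
        (Real.sInf_of_not_bddBelow fun h => hunbdd (h.mono hsub)).symm
    _ ≤ Ilow Om Om f x := sInf_image_ball_le_Ilow (hBOm hx) hδ
    _ ≤ f x := hf x (hBOm hx)

lemma bddAbove_image_of_le_Shigh (hf : ∀ x ∈ Om, f x ≤ Shigh Om Om f x) :
    ∀ B ⊆ Om, IsBounded B → BddAbove (f '' B) := by
  intro B hBOm hB
  have hneg : ∀ x ∈ Om, Ilow Om Om (-f) x ≤ (-f) x := fun x hx => by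
    rw [Ilow_neg]
    exact neg_le_neg (hf x hx)
  obtain ⟨m, hm⟩ := bddBelow_image_of_Ilow_le hneg B hBOm hB
  exact ⟨-m, forall_mem_image.2 fun y hy => le_neg_of_le_neg (hm (mem_image_of_mem (-f) hy))⟩

lemma Ilow_add_le (hf : BoundedOnBounded Om f) (hg : BoundedOnBounded Om g) (hx : x ∈ Om) :
    Ilow Om Om (f + g) x ≤ Ilow Om Om f x + Shigh Om Om g x := by
  have hlsc : LowerSemicontinuousOn (fun y => Ilow Om Om (f + g) y + Ilow Om Om (-g) y) Om :=
    (lowerSemicontinuousOn_Ilow (hf.add hg)).add (lowerSemicontinuousOn_Ilow hg.neg)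
  have hle : ∀ y ∈ Om, Ilow Om Om (f + g) y + Ilow Om Om (-g) y ≤ f y := fun y hy =>
    (add_le_add (Ilow_le (hf.add hg) hy) (Ilow_le hg.neg hy)).trans_eq
      (add_neg_cancel_right (f y) (g y))
  have hminorant := le_Ilow hlsc hle hx
  rw [Ilow_neg, Pi.neg_apply] at hminorant
  linarith

lemma le_Shigh_add (hf : BoundedOnBounded Om f) (hg : BoundedOnBounded Om g) (hx : x ∈ Om) :
    Ilow Om Om f x + Shigh Om Om g x ≤ Shigh Om Om (f + g) x := by
  have hneg := Ilow_add_le hg.neg hf.neg hx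
  rw [← neg_add, add_comm g, Ilow_neg, Ilow_neg, Shigh_neg] at hneg
  simp only [Pi.neg_apply] at hneg
  linarith

end Baire

section HContPair

variable {n : ℕ} {Om : Set (Pt n)} {f u v u' v' u₁ v₁ u₂ v₂ pl pu ql qu : Pt n → ℝ}

theorem hContPair_iff : HContPair Om u v ↔
    BoundedOnBounded Om u ∧ BoundedOnBounded Om v ∧
      EqOn (Ilow Om Om v) u Om ∧ EqOn (Shigh Om Om u) v Om := by
  constructor
  · rintro ⟨⟨hu, hv, huv⟩, H⟩
    have hHu := H u u hu hu fun x hx => ⟨le_rfl, le_rfl, huv x hx⟩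
    have hHv := H v v hv hv fun x hx => ⟨huv x hx, le_rfl, le_rfl⟩
    have hu_below := bddBelow_image_of_Ilow_le fun x hx => (hHu x hx).1.le
    have hv_above := bddAbove_image_of_le_Shigh fun x hx => (hHv x hx).2.ge
    exact ⟨.of_bddBelow_of_bddAbove hu_below hv_above (fun _ _ => le_rfl) huv,
      .of_bddBelow_of_bddAbove hu_below hv_above huv (fun _ _ => le_rfl),
      fun x hx => (hHv x hx).1, fun x hx => (hHu x hx).2⟩
  · rintro ⟨hu, hv, hIv, hSu⟩
    refine ⟨⟨hu.locBddOn, hv.locBddOn, fun x hx => hIv hx ▸ Ilow_le hv hx⟩, ?_⟩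
    intro p q _ _ hpq x hx
    have hp : BoundedOnBounded Om p := hu.of_le_of_le hv (fun y hy => (hpq y hy).1)
      fun y hy => (hpq y hy).2.1.trans (hpq y hy).2.2
    have hq : BoundedOnBounded Om q := hu.of_le_of_le hv
      (fun y hy => (hpq y hy).1.trans (hpq y hy).2.1) fun y hy => (hpq y hy).2.2
    constructor
    · refine le_antisymm ?_ ?_
      · exact hIv hx ▸ Ilow_mono hp (fun y hy => (hpq y hy).2.1.trans (hpq y hy).2.2) hx
      · exact hIv hx ▸ le_Ilow (lowerSemicontinuousOn_Ilow hv)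
          (fun y hy => (hIv hy).trans_le (hpq y hy).1) hx
    · refine le_antisymm ?_ ?_
      · exact hSu hx ▸ Shigh_le (upperSemicontinuousOn_Shigh hu)
          (fun y hy => (hpq y hy).2.2.trans_eq (hSu hy).symm) hx
      · exact hSu hx ▸ Shigh_mono hq (fun y hy => (hpq y hy).1.trans (hpq y hy).2.1) hx

namespace HContPair

lemma boundedOnBounded_left (h : HContPair Om u v) : BoundedOnBounded Om u :=
  (hContPair_iff.1 h).1

lemma boundedOnBounded_right (h : HContPair Om u v) : BoundedOnBounded Om v :=
  (hContPair_iff.1 h).2.1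

lemma Ilow_eqOn (h : HContPair Om u v) : EqOn (Ilow Om Om v) u Om :=
  (hContPair_iff.1 h).2.2.1

lemma Shigh_eqOn (h : HContPair Om u v) : EqOn (Shigh Om Om u) v Om :=
  (hContPair_iff.1 h).2.2.2

lemma le (h : HContPair Om u v) : ∀ x ∈ Om, u x ≤ v x :=
  h.1.2.2

lemma lowerSemicontinuousOn (h : HContPair Om u v) : LowerSemicontinuousOn u Om :=
  fun x hx => LowerSemicontinuousWithinAt.congr_of_eventuallyEq
    (lowerSemicontinuousOn_Ilow h.boundedOnBounded_right x hx) hx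
    (h.Ilow_eqOn.eventuallyEq_of_mem self_mem_nhdsWithin)

lemma upperSemicontinuousOn (h : HContPair Om u v) : UpperSemicontinuousOn v Om :=
  fun x hx => UpperSemicontinuousWithinAt.congr_of_eventuallyEq
    (upperSemicontinuousOn_Shigh h.boundedOnBounded_left x hx) hx
    (h.Shigh_eqOn.eventuallyEq_of_mem self_mem_nhdsWithin)

lemma sCont (h : HContPair Om u v) : SCont Om u v := fun _ hx =>
  ⟨le_antisymm (Ilow_le h.boundedOnBounded_left hx)
      (le_Ilow h.lowerSemicontinuousOn (fun _ _ => le_rfl) hx),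
    le_antisymm (Shigh_le h.upperSemicontinuousOn (fun _ _ => le_rfl) hx)
      (le_Shigh h.boundedOnBounded_right hx)⟩

lemma neg (h : HContPair Om u v) : HContPair Om (-v) (-u) := by
  refine hContPair_iff.2
    ⟨h.boundedOnBounded_right.neg, h.boundedOnBounded_left.neg, fun x hx => ?_, fun x hx => ?_⟩
  · rw [Ilow_neg, Pi.neg_apply, h.Shigh_eqOn hx, Pi.neg_apply]
  · rw [Shigh_neg, Pi.neg_apply, h.Ilow_eqOn hx, Pi.neg_apply]

lemma left_le_left (h : HContPair Om u v) (h' : HContPair Om u' v')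
    (hle : ∀ x ∈ Om, u x ≤ v' x) : ∀ x ∈ Om, u x ≤ u' x := fun _ hx =>
  (le_Ilow h.lowerSemicontinuousOn hle hx).trans_eq (h'.Ilow_eqOn hx)

lemma right_le_right (h : HContPair Om u v) (h' : HContPair Om u' v')
    (hle : ∀ x ∈ Om, u x ≤ v' x) : ∀ x ∈ Om, v x ≤ v' x := fun _ hx =>
  (h.Shigh_eqOn hx).symm.trans_le (Shigh_le h'.upperSemicontinuousOn hle hx)

lemma Ilow_add_le_Shigh_add (h₁ : HContPair Om u₁ v₁) (h₂ : HContPair Om u₂ v₂) :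
    ∀ x ∈ Om, Ilow Om Om (v₁ + v₂) x ≤ Shigh Om Om (u₁ + u₂) x := by
  intro x hx
  calc Ilow Om Om (v₁ + v₂) x
      ≤ Ilow Om Om v₁ x + Shigh Om Om v₂ x :=
        Ilow_add_le h₁.boundedOnBounded_right h₂.boundedOnBounded_right hx
    _ = u₁ x + v₂ x := by rw [h₁.Ilow_eqOn hx, (h₂.sCont x hx).2]
    _ = Ilow Om Om u₁ x + Shigh Om Om u₂ x := by rw [(h₁.sCont x hx).1, h₂.Shigh_eqOn hx]
    _ ≤ Shigh Om Om (u₁ + u₂) x :=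
        le_Shigh_add h₁.boundedOnBounded_left h₂.boundedOnBounded_left hx

end HContPair

theorem hContPair_Ilow_Ilow_Shigh (hf : BoundedOnBounded Om f) :
    HContPair Om (Ilow Om Om (Ilow Om Om (Shigh Om Om f)))
      (Shigh Om Om (Ilow Om Om (Shigh Om Om f))) := by
  set a := Ilow Om Om (Shigh Om Om f)
  have ha : BoundedOnBounded Om a := hf.Shigh.Ilow
  have hIa : ∀ x ∈ Om, a x ≤ Ilow Om Om a x := fun x =>
    le_Ilow (lowerSemicontinuousOn_Ilow hf.Shigh) fun _ _ => le_rfl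
  have hSa : ∀ x ∈ Om, Shigh Om Om a x ≤ Shigh Om Om f x := fun x =>
    Shigh_le (upperSemicontinuousOn_Shigh hf) fun y => Ilow_le hf.Shigh
  refine hContPair_iff.2 ⟨ha.Ilow, ha.Shigh, fun x hx => le_antisymm ?_ ?_,
    fun x hx => le_antisymm ?_ ?_⟩
  · exact (Ilow_mono ha.Shigh hSa hx).trans (hIa x hx)
  · exact Ilow_mono ha (fun y => le_Shigh ha) hx
  · exact Shigh_mono ha (fun y => Ilow_le ha) hx
  · exact Shigh_mono ha.Ilow hIa hx

namespace IsOplus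

lemma neg (h : IsOplus Om u₁ v₁ u₂ v₂ pl pu) :
    IsOplus Om (-v₁) (-u₁) (-v₂) (-u₂) (-pu) (-pl) := by
  refine ⟨h.1.neg, fun x hx => ?_⟩
  obtain ⟨hl, hm, hu⟩ := h.2 x hx
  simp only [Pi.neg_apply, ← neg_add, neg_le_neg_iff]
  exact ⟨by linarith, hm, by linarith⟩

lemma left_le_right (h₁ : HContPair Om u₁ v₁) (h₂ : HContPair Om u₂ v₂)
    (hp : IsOplus Om u₁ v₁ u₂ v₂ pl pu) (hq : IsOplus Om u₁ v₁ u₂ v₂ ql qu) :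
    ∀ x ∈ Om, pl x ≤ qu x := by
  intro x hx
  calc pl x ≤ Ilow Om Om (v₁ + v₂) x :=
        le_Ilow hp.1.lowerSemicontinuousOn (fun y hy => (hp.2 y hy).2.1.trans (hp.2 y hy).2.2) hx
    _ ≤ Shigh Om Om (u₁ + u₂) x := h₁.Ilow_add_le_Shigh_add h₂ x hx
    _ ≤ qu x :=
        Shigh_le hq.1.upperSemicontinuousOn (fun y hy => (hq.2 y hy).1.trans (hq.2 y hy).2.1) hx

theorem unique (h₁ : HContPair Om u₁ v₁) (h₂ : HContPair Om u₂ v₂)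
    (hp : IsOplus Om u₁ v₁ u₂ v₂ pl pu) (hq : IsOplus Om u₁ v₁ u₂ v₂ ql qu) :
    EqOn pl ql Om ∧ EqOn pu qu Om := by
  have hpq := left_le_right h₁ h₂ hp hq
  have hqp := left_le_right h₁ h₂ hq hp
  exact ⟨fun x hx => le_antisymm (hp.1.left_le_left hq.1 hpq x hx)
      (hq.1.left_le_left hp.1 hqp x hx),
    fun x hx => le_antisymm (hp.1.right_le_right hq.1 hpq x hx)
      (hq.1.right_le_right hp.1 hqp x hx)⟩

end IsOplus

theorem isOplus_Ilow_Shigh (h₁ : HContPair Om u₁ v₁) (h₂ : HContPair Om u₂ v₂) :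
    IsOplus Om u₁ v₁ u₂ v₂ (Ilow Om Om (Ilow Om Om (Shigh Om Om (v₁ + v₂))))
      (Shigh Om Om (Ilow Om Om (Shigh Om Om (v₁ + v₂)))) := by
  have ht : BoundedOnBounded Om (v₁ + v₂) :=
    h₁.boundedOnBounded_right.add h₂.boundedOnBounded_right
  have hs_lsc : LowerSemicontinuousOn (u₁ + u₂) Om :=
    h₁.lowerSemicontinuousOn.add h₂.lowerSemicontinuousOn
  have ht_usc : UpperSemicontinuousOn (v₁ + v₂) Om :=
    h₁.upperSemicontinuousOn.add h₂.upperSemicontinuousOn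
  have hs_le : ∀ x ∈ Om, (u₁ + u₂) x ≤ Shigh Om Om (v₁ + v₂) x := fun x hx =>
    (add_le_add (h₁.le x hx) (h₂.le x hx)).trans (le_Shigh ht hx)
  have hle_t : ∀ x ∈ Om, Ilow Om Om (Shigh Om Om (v₁ + v₂)) x ≤ (v₁ + v₂) x := fun x hx =>
    (Ilow_le ht.Shigh hx).trans (Shigh_le ht_usc (fun _ _ => le_rfl) hx)
  have hpair := hContPair_Ilow_Ilow_Shigh ht
  exact ⟨hpair, fun x hx => ⟨le_Ilow hs_lsc (fun y => le_Ilow hs_lsc hs_le) hx,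
    hpair.le x hx, Shigh_le ht_usc hle_t hx⟩⟩

theorem isOplus_Shigh_Ilow (h₁ : HContPair Om u₁ v₁) (h₂ : HContPair Om u₂ v₂) :
    IsOplus Om u₁ v₁ u₂ v₂ (Ilow Om Om (Shigh Om Om (Ilow Om Om (u₁ + u₂))))
      (Shigh Om Om (Shigh Om Om (Ilow Om Om (u₁ + u₂)))) := by
  have hdual := (isOplus_Ilow_Shigh h₁.neg h₂.neg).neg
  simpa only [← neg_add, Ilow_neg, Shigh_neg, neg_neg] using hdual

end HContPair

theorem stmt9_general {n : ℕ} {Om : Set (Pt n)} {u₁ v₁ u₂ v₂ : Pt n → ℝ}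
    (h₁ : HContPair Om u₁ v₁) (h₂ : HContPair Om u₂ v₂) :
    IsOplus Om u₁ v₁ u₂ v₂ (Ilow Om Om (Ilow Om Om (Shigh Om Om (v₁ + v₂))))
      (Shigh Om Om (Ilow Om Om (Shigh Om Om (v₁ + v₂)))) ∧
    IsOplus Om u₁ v₁ u₂ v₂ (Ilow Om Om (Shigh Om Om (Ilow Om Om (u₁ + u₂))))
      (Shigh Om Om (Shigh Om Om (Ilow Om Om (u₁ + u₂)))) ∧
    (∀ pl pu : Pt n → ℝ, IsOplus Om u₁ v₁ u₂ v₂ pl pu →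
      ∀ x ∈ Om,
        pl x = Ilow Om Om (Ilow Om Om (Shigh Om Om (v₁ + v₂))) x ∧
        pu x = Shigh Om Om (Ilow Om Om (Shigh Om Om (v₁ + v₂))) x ∧
        pl x = Ilow Om Om (Shigh Om Om (Ilow Om Om (u₁ + u₂))) x ∧
        pu x = Shigh Om Om (Shigh Om Om (Ilow Om Om (u₁ + u₂))) x) := by
  have hA := isOplus_Ilow_Shigh h₁ h₂
  have hC := isOplus_Shigh_Ilow h₁ h₂
  refine ⟨hA, hC, fun pl pu hp x hx => ?_⟩
  obtain ⟨hAl, hAu⟩ := hp.unique h₁ h₂ hA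
  obtain ⟨hCl, hCu⟩ := hp.unique h₁ h₂ hC
  exact ⟨hAl hx, hAu hx, hCl hx, hCu hx⟩

theorem stmt9 {n : ℕ} (Om : Set (Pt n)) (hOm : IsOpen Om)
    (u₁ v₁ u₂ v₂ : Pt n → ℝ)
    (h₁ : HContPair Om u₁ v₁) (h₂ : HContPair Om u₂ v₂)
    (s t : Pt n → ℝ)
    (hs : s = fun x => u₁ x + u₂ x) (ht : t = fun x => v₁ x + v₂ x) :
    HContPair Om (Ilow Om Om (Ilow Om Om (Shigh Om Om t)))
      (Shigh Om Om (Ilow Om Om (Shigh Om Om t))) ∧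
    (∀ x ∈ Om, s x ≤ Ilow Om Om (Ilow Om Om (Shigh Om Om t)) x ∧
      Ilow Om Om (Ilow Om Om (Shigh Om Om t)) x ≤
        Shigh Om Om (Ilow Om Om (Shigh Om Om t)) x ∧
      Shigh Om Om (Ilow Om Om (Shigh Om Om t)) x ≤ t x) ∧
    HContPair Om (Ilow Om Om (Shigh Om Om (Ilow Om Om s)))
      (Shigh Om Om (Shigh Om Om (Ilow Om Om s))) ∧
    (∀ x ∈ Om, s x ≤ Ilow Om Om (Shigh Om Om (Ilow Om Om s)) x ∧
      Ilow Om Om (Shigh Om Om (Ilow Om Om s)) x ≤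
        Shigh Om Om (Shigh Om Om (Ilow Om Om s)) x ∧
      Shigh Om Om (Shigh Om Om (Ilow Om Om s)) x ≤ t x) ∧
    (∀ pl pu : Pt n → ℝ, IsOplus Om u₁ v₁ u₂ v₂ pl pu →
      ∀ x ∈ Om,
        pl x = Ilow Om Om (Ilow Om Om (Shigh Om Om t)) x ∧
        pu x = Shigh Om Om (Ilow Om Om (Shigh Om Om t)) x ∧
        pl x = Ilow Om Om (Shigh Om Om (Ilow Om Om s)) x ∧
        pu x = Shigh Om Om (Shigh Om Om (Ilow Om Om s)) x) := by
  obtain ⟨hA, hC, hunique⟩ := stmt9_general h₁ h₂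
  exact hs ▸ ht ▸ ⟨hA.1, hA.2, hC.1, hC.2, hunique⟩
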